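/- arXiv:1712.05600 — 3 statements merged into one kernel-verified Lean document; each statement's English description precedes it below -/
import Mathlib

section
/- For any n×n (p,u)-matrix T over a K-algebra A, the quantum row-determinant equals the quantum column-determinant: Σ_{σ ∈ S_n} (−q)_σ t_{1σ(1)} t_{2σ(2)} ⋯ t_{nσ(n)} = Σ_{σ ∈ S_n} (−p)_σ t_{σ(1)1} t_{σ(2)2} ⋯ t_{σ(n)n}. -/
open Finset

variable {K : Type*} [Field K] {A : Type*} [Ring A] [Algebra K A]

/-- The `(p,u)`-condition on the multiparameters: `u` is a unit with `u² ≠ -1`, the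
`pᵢⱼ, qᵢⱼ` are units with `pᵢⱼqᵢⱼ = u²` for `i < j`, `pᵢⱼpⱼᵢ = qᵢⱼqⱼᵢ = 1` and
`pᵢᵢ = qᵢᵢ = 1`. -/
def PUCondition {N : ℕ} (p q : Fin N → Fin N → K) (u : K) : Prop :=
  u ≠ 0 ∧ u ^ 2 ≠ -1 ∧
    (∀ i j : Fin N, i < j → p i j * q i j = u ^ 2) ∧
    (∀ i j : Fin N, p i j * p j i = 1) ∧
    (∀ i j : Fin N, q i j * q j i = 1) ∧
    (∀ i : Fin N, p i i = 1 ∧ q i i = 1)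

/-- A `(p,u)`-matrix over the `K`-algebra `A`. -/
def IsPUMatrix {N : ℕ} (p q : Fin N → Fin N → K) (u : K)
    (T : Matrix (Fin N) (Fin N) A) : Prop :=
  ∀ i j k l : Fin N, i < j → k < l →
    T i k * T i l = q k l • (T i l * T i k) ∧
    T i k * T j k = p i j • (T j k * T i k) ∧
    q k l • (T i l * T j k) = p i j • (T j k * T i l) ∧
    (q k l)⁻¹ • (T i k * T j l) - (q i j)⁻¹ • (T j l * T i k)
      = (1 - u⁻¹ ^ 2) • (T i l * T j k)

/-- Ordered product `f 0 * f 1 * ⋯ * f (t-1)` in a (possibly noncommutative) ring. -/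
def oprod {t : ℕ} (f : Fin t → A) : A := ((List.finRange t).map f).prod

/-- The sign `(−q)_σ = (−1)^{ℓ(σ)} ∏_{i<j, σ(i)>σ(j)} q_{σ(j)σ(i)}`. -/
def qSign {N : ℕ} (q : Fin N → Fin N → K) (σ : Equiv.Perm (Fin N)) : K :=
  ∏ x ∈ Finset.univ.filter
      (fun x : Fin N × Fin N => x.1 < x.2 ∧ σ x.2 < σ x.1),
    (-q (σ x.2) (σ x.1))

/-- The quantum determinant `det_q(T) = Σ_σ (−q)_σ t_{1σ(1)} ⋯ t_{Nσ(N)}`. -/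
def qdet {N : ℕ} (q : Fin N → Fin N → K) (T : Matrix (Fin N) (Fin N) A) : A :=
  ∑ σ : Equiv.Perm (Fin N), qSign q σ • oprod (fun i => T i (σ i))

/-- The quantum minor with row indices `r` and column indices `c`. -/
def qminor {N t : ℕ} (q : Fin N → Fin N → K) (T : Matrix (Fin N) (Fin N) A)
    (r c : Fin t → Fin N) : A :=
  ∑ σ : Equiv.Perm (Fin t),
    qSign (fun a b => q (c a) (c b)) σ • oprod (fun a => T (r a) (c (σ a)))
/-- Row determinant, for use in the induction. -/
def rdetAux {N : ℕ} (q : Fin N → Fin N → K) (T : Fin N → Fin N → A) : A :=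
  ∑ σ : Equiv.Perm (Fin N), qSign q σ • oprod (fun i => T i (σ i))

/-- The permutation with `0 ↦ k` and `i+1 ↦ k.succAbove (τ i)`. -/
def consPermAux {n : ℕ} (k : Fin (n+1)) (τ : Equiv.Perm (Fin n)) : Equiv.Perm (Fin (n+1)) :=
  ((finSuccEquiv' 0).trans (Equiv.optionCongr τ)).trans (finSuccEquiv' k).symm

theorem consPermAux_zero {n : ℕ} (k : Fin (n+1)) (τ : Equiv.Perm (Fin n)) :
    consPermAux k τ 0 = k := by
  simp [consPermAux]

theorem consPermAux_succ {n : ℕ} (k : Fin (n+1)) (τ : Equiv.Perm (Fin n)) (i : Fin n) :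
    consPermAux k τ i.succ = k.succAbove (τ i) := by
  have h : (finSuccEquiv' (0 : Fin (n+1))) i.succ = some i := by
    simpa using finSuccEquiv'_succAbove (0 : Fin (n+1)) i
  simp [consPermAux, h]

theorem consPermAux_bij (n : ℕ) :
    Function.Bijective (fun x : Fin (n+1) × Equiv.Perm (Fin n) => consPermAux x.1 x.2) := by
  rw [Fintype.bijective_iff_injective_and_card]
  constructor
  · rintro ⟨k, τ⟩ ⟨l, ρ⟩ h
    simp only at h
    have h0 : k = l := by
      have := congrArg (fun σ : Equiv.Perm (Fin (n+1)) => σ 0) h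
      simpa only [consPermAux_zero] using this
    subst h0
    have : τ = ρ := by
      ext i
      have := congrArg (fun σ : Equiv.Perm (Fin (n+1)) => σ i.succ) h
      simp only [consPermAux_succ] at this
      rw [Fin.succAbove_right_injective this]
    rw [this]
  · simp [Fintype.card_perm, Nat.factorial_succ]

theorem qSign_eq_prod {N : ℕ} (q : Fin N → Fin N → K) (σ : Equiv.Perm (Fin N)) :
    qSign q σ = ∏ i, ∏ j, if i < j ∧ σ j < σ i then -q (σ j) (σ i) else 1 := by
  rw [qSign, Finset.prod_filter, ← Finset.univ_product_univ, Finset.prod_product]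

theorem qSign_consPermAux {n : ℕ} (q : Fin (n+1) → Fin (n+1) → K) (k : Fin (n+1))
    (τ : Equiv.Perm (Fin n)) :
    qSign q (consPermAux k τ) = (∏ j, if j < k then -q j k else 1) *
      qSign (fun a b => q (k.succAbove a) (k.succAbove b)) τ := by
  rw [qSign_eq_prod, qSign_eq_prod, Fin.prod_univ_succ]
  congr 1
  · rw [Fin.prod_univ_succ, Fin.prod_univ_succAbove _ k]
    simp only [consPermAux_zero, consPermAux_succ, lt_self_iff_false, false_and, if_false,
      Fin.succ_pos, true_and, one_mul]
    exact Equiv.prod_comp τ (fun j => if k.succAbove j < k then -q (k.succAbove j) k else 1)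
  · refine Finset.prod_congr rfl fun i _ => ?_
    rw [Fin.prod_univ_succ]
    simp only [consPermAux_succ, Fin.not_lt_zero, false_and, if_false, one_mul,
      Fin.succ_lt_succ_iff, Fin.succAbove_lt_succAbove_iff]

theorem oprod_succ' {n : ℕ} (f : Fin (n+1) → A) :
    oprod f = f 0 * oprod (fun i => f i.succ) := by
  simp [oprod, List.finRange_succ, Function.comp_def]

theorem rdetAux_succ {n : ℕ} (q : Fin (n+1) → Fin (n+1) → K) (T : Fin (n+1) → Fin (n+1) → A) :
    rdetAux q T = ∑ k, (∏ j, if j < k then -q j k else 1) •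
      (T 0 k * rdetAux (fun a b => q (k.succAbove a) (k.succAbove b))
        (fun a b => T a.succ (k.succAbove b))) := by
  rw [rdetAux, ← (consPermAux_bij n).sum_comp, ← Finset.univ_product_univ, Finset.sum_product]
  refine Finset.sum_congr rfl fun k _ => ?_
  rw [rdetAux, Finset.mul_sum, Finset.smul_sum]
  refine Finset.sum_congr rfl fun τ _ => ?_
  rw [qSign_consPermAux, oprod_succ']
  simp only [consPermAux_zero, consPermAux_succ, mul_smul_comm, smul_smul]

theorem rdetAux_eq : ∀ (n : ℕ) (p q : Fin n → Fin n → K) (T : Fin n → Fin n → A),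
    (∀ i j k l : Fin n, i < j → k < l →
      q k l • (T i l * T j k) = p i j • (T j k * T i l)) →
    rdetAux q T = rdetAux p (fun a b => T b a) := by
  intro n
  induction n using Nat.strong_induction_on with
  | _ n ih =>
  intro p q T h
  match n, ih, p, q, T, h with
  | 0, _, p, q, T, h => simp [rdetAux, qSign, oprod]
  | 1, _, p, q, T, h => simp [rdetAux, qSign, oprod, Subsingleton.elim _ (0 : Fin 1)]
  | m+2, ih, p, q, T, h =>
    rw [rdetAux_succ q, rdetAux_succ p, Fin.sum_univ_succ (n := m+1),
      Fin.sum_univ_succ (n := m+1) (fun k => _ • (T k 0 * _))]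
    congr 1
    · simp only [Fin.not_lt_zero, if_false, Fin.succAbove_zero]
      rw [ih (m+1) (by omega) (fun a b => p a.succ b.succ) (fun a b => q a.succ b.succ)
        (fun a b => T a.succ b.succ)
        (fun i j k l hij hkl => h _ _ _ _ (Fin.succ_lt_succ_iff.2 hij) (Fin.succ_lt_succ_iff.2 hkl))]
    have e1 : ∀ k : Fin (m+1), _ := fun k => ih (m+1) (by omega) (fun a b => p a.succ b.succ)
        (fun a b => q (k.succ.succAbove a) (k.succ.succAbove b))
        (fun a b => T a.succ (k.succ.succAbove b))
        (fun i j _ _ hij hkl => h _ _ _ _ (Fin.succ_lt_succ_iff.2 hij)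
          (Fin.succAbove_lt_succAbove_iff.2 hkl))
    have e2 : ∀ i : Fin (m+1), _ := fun i => ih (m+1) (by omega)
        (fun a b => p (i.succ.succAbove a) (i.succ.succAbove b))
        (fun a b => q a.succ b.succ)
        (fun a b => T (i.succ.succAbove a) b.succ)
        (fun i j _ _ hij hkl => h _ _ _ _ (Fin.succAbove_lt_succAbove_iff.2 hij)
          (Fin.succ_lt_succ_iff.2 hkl))
    have e3 : ∀ i k : Fin (m+1), _ := fun i k => ih m (by omega)
        (fun a b => p (i.succAbove a).succ (i.succAbove b).succ)
        (fun a b => q (k.succAbove a).succ (k.succAbove b).succ)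
        (fun a b => T (i.succAbove a).succ (k.succAbove b).succ)
        (fun i j _ _ hij hkl => h _ _ _ _
          (Fin.succ_lt_succ_iff.2 (Fin.succAbove_lt_succAbove_iff.2 hij))
          (Fin.succ_lt_succ_iff.2 (Fin.succAbove_lt_succAbove_iff.2 hkl)))
    simp only [e1, ← e2]
    simp only [rdetAux_succ (n := m), Fin.succ_succAbove_zero, Fin.succ_succAbove_succ, e3,
      Finset.mul_sum, Finset.smul_sum]
    rw [Finset.sum_comm]
    refine Finset.sum_congr rfl fun i _ => Finset.sum_congr rfl fun k _ => ?_
    rw [Fin.prod_univ_succ (n := m+1), Fin.prod_univ_succ (n := m+1)]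
    simp only [Fin.succ_pos, if_true, Fin.succ_lt_succ_iff, mul_smul_comm, ← mul_assoc, smul_smul]
    have hh := h 0 i.succ 0 k.succ (Fin.succ_pos _) (Fin.succ_pos _)
    generalize (∏ j, if j < k then -q j.succ k.succ else 1) = x
    generalize (∏ j, if j < i then -p j.succ i.succ else 1) = y
    have a1 : -q 0 k.succ * x * y = -(x * y) * q 0 k.succ := by ring
    have a2 : -p 0 i.succ * y * x = -(x * y) * p 0 i.succ := by ring
    rw [a1, a2, mul_smul, mul_smul, ← smul_mul_assoc (q 0 k.succ) (T 0 k.succ * T i.succ 0), hh,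
      smul_mul_assoc]

/-- for a `(p,u)`-matrix the quantum row-determinant equals
the quantum column-determinant. -/
theorem rdet_eq_cdet {n : ℕ} (p q : Fin n → Fin n → K) (u : K)
    (hpu : PUCondition p q u) (T : Matrix (Fin n) (Fin n) A)
    (hT : IsPUMatrix p q u T) :
    (∑ σ : Equiv.Perm (Fin n), qSign q σ • oprod (fun i => T i (σ i)))
      = ∑ σ : Equiv.Perm (Fin n), qSign p σ • oprod (fun i => T (σ i) i) := by
  exact rdetAux_eq n p q T (fun i j k l hij hkl => (hT i j k l hij hkl).2.2.1)
end

section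
/- (Row Laplace expansion) Let T be an n×n (p,u)-matrix over a K-algebra A and fix a t-shuffle σ ∈ S_n, i.e. σ(1) < ⋯ < σ(t) and σ(t+1) < ⋯ < σ(n). Then det_q(T) = Σ_α ((−q)_α / (−q)_σ) · det_q(T^{σ(1)…σ(t)}_{α(1)…α(t)}) · det_q(T^{σ(t+1)…σ(n)}_{α(t+1)…α(n)}), where the sum runs over all t-shuffles α ∈ S_n with α(1) < ⋯ < α(t) and α(t+1) < ⋯ < α(n). -/
open Finset

variable {K : Type*} [Field K] {A : Type*} [Ring A] [Algebra K A]

theorem qL_sign_eq {N : ℕ} (q : Fin N → Fin N → K) (σ : Equiv.Perm (Fin N)) :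
    qSign q σ = ∏ x, ∏ y, if x < y ∧ σ y < σ x then -q (σ y) (σ x) else 1 := by
  unfold qSign
  rw [Finset.prod_filter, Fintype.prod_prod_type]

theorem qL_q_ne {N : ℕ} (p q : Fin N → Fin N → K) (u : K)
    (hpu : PUCondition p q u) (i j : Fin N) : q i j ≠ 0 := by
  intro h
  have := hpu.2.2.2.2.1 i j
  rw [h, zero_mul] at this
  exact zero_ne_one this

theorem qL_sign_ne {N : ℕ} (p q : Fin N → Fin N → K) (u : K)
    (hpu : PUCondition p q u) (σ : Equiv.Perm (Fin N)) : qSign q σ ≠ 0 := by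
  unfold qSign
  exact Finset.prod_ne_zero_iff.2 fun x _ => neg_ne_zero.2 (qL_q_ne p q u hpu _ _)

theorem qL_swap_lt {n : ℕ} (k : Fin n) (x y : Fin (n + 1))
    (h1 : ¬ (x = k.castSucc ∧ y = k.succ)) (h2 : ¬ (x = k.succ ∧ y = k.castSucc)) :
    (Equiv.swap k.castSucc k.succ x < Equiv.swap k.castSucc k.succ y ↔ x < y) := by
  rw [Equiv.swap_apply_def, Equiv.swap_apply_def]
  simp only [Fin.ext_iff, Fin.val_castSucc, Fin.val_succ] at h1 h2
  split_ifs <;> simp only [Fin.ext_iff, Fin.lt_def, Fin.val_castSucc, Fin.val_succ] at * <;> omega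

theorem qL_sign_swap {n : ℕ} (q : Fin (n + 1) → Fin (n + 1) → K)
    (hq : ∀ i j, q i j * q j i = 1) (σ : Equiv.Perm (Fin (n + 1))) (k : Fin n) :
    qSign q (σ * Equiv.swap k.castSucc k.succ) = -q (σ k.castSucc) (σ k.succ) * qSign q σ := by
  set s := Equiv.swap k.castSucc k.succ with hs
  have hss : ∀ x, s (s x) = x := fun x => by rw [hs]; exact Equiv.swap_apply_self _ _ _
  have hne : k.castSucc ≠ k.succ := (Fin.castSucc_lt_succ).ne
  have hlt : k.castSucc < k.succ := Fin.castSucc_lt_succ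
  rw [qL_sign_eq, qL_sign_eq]
  have e1 : (∏ x, ∏ y, if x < y ∧ (σ * s) y < (σ * s) x then -q ((σ * s) y) ((σ * s) x) else 1)
      = ∏ x, ∏ y, if s x < s y ∧ σ y < σ x then -q (σ y) (σ x) else 1 := by
    rw [← Equiv.prod_comp s]
    refine Finset.prod_congr rfl fun x _ => ?_
    rw [← Equiv.prod_comp s]
    refine Finset.prod_congr rfl fun y _ => ?_
    simp only [Equiv.Perm.mul_apply, hss]
  rw [e1]
  have e2 : ∀ x y, (if s x < s y ∧ σ y < σ x then -q (σ y) (σ x) else 1)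
      = (if x = k.castSucc then (if y = k.succ then
            (if σ k.succ < σ k.castSucc then -q (σ k.castSucc) (σ k.succ) else 1) else 1) else 1)
        * (if x = k.succ then (if y = k.castSucc then
            (if σ k.castSucc < σ k.succ then -q (σ k.castSucc) (σ k.succ) else 1) else 1) else 1)
        * (if x < y ∧ σ y < σ x then -q (σ y) (σ x) else 1) := by
    intro x y
    by_cases h1 : x = k.castSucc ∧ y = k.succ
    · obtain ⟨rfl, rfl⟩ := h1
      have a1 : s k.castSucc = k.succ := Equiv.swap_apply_left _ _
      have a2 : s k.succ = k.castSucc := Equiv.swap_apply_right _ _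
      have := hq (σ k.castSucc) (σ k.succ)
      simp only [a1, a2, hlt, hlt.not_gt, hne, false_and, true_and, if_true, if_false, mul_one]
      split_ifs
      · rw [neg_mul_neg, this]
      · simp
    · by_cases h2 : x = k.succ ∧ y = k.castSucc
      · obtain ⟨rfl, rfl⟩ := h2
        have a1 : s k.castSucc = k.succ := Equiv.swap_apply_left _ _
        have a2 : s k.succ = k.castSucc := Equiv.swap_apply_right _ _
        simp only [a1, a2, hlt, hlt.not_gt, hne.symm, false_and, true_and, if_true, if_false,
          mul_one, one_mul]
      · have hiff : s x < s y ↔ x < y := qL_swap_lt k x y h1 h2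
        simp only [hiff]
        have b1 : (if x = k.castSucc then (if y = k.succ then
            (if σ k.succ < σ k.castSucc then -q (σ k.castSucc) (σ k.succ) else 1) else 1) else 1)
            = 1 := by
          split_ifs <;> tauto
        have b2 : (if x = k.succ then (if y = k.castSucc then
            (if σ k.castSucc < σ k.succ then -q (σ k.castSucc) (σ k.succ) else 1) else 1) else 1)
            = 1 := by
          split_ifs <;> tauto
        rw [b1, b2, one_mul, one_mul]
  simp only [e2, Finset.prod_mul_distrib]
  congr 1
  have c : ∀ (a b : Fin (n + 1)) (z : K),
      (∏ x, ∏ y, if x = a then (if y = b then z else 1) else 1) = z := by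
    intro a b z
    rw [Finset.prod_eq_single a, Finset.prod_eq_single b] <;> simp +contextual
  rw [c, c]
  have hσ : σ k.castSucc ≠ σ k.succ := fun h => hne (σ.injective h)
  rcases lt_or_gt_of_ne hσ with h | h
  · simp [h, h.not_gt]
  · simp [h, h.not_gt]

theorem qL_exch {N : ℕ} (p q : Fin N → Fin N → K) (u : K)
    (hpu : PUCondition p q u) (T : Matrix (Fin N) (Fin N) A)
    (hT : IsPUMatrix p q u T) (a b c d : Fin N) (hab : a < b) (hcd : c < d) :
    T b c * T a d + q a b • (T a c * T b d)
      = q c d • (T b d * T a c + q a b • (T a d * T b c)) := by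
  obtain ⟨hu, -, h1, h2, h3, -⟩ := hpu
  obtain ⟨-, -, r3, r4⟩ := hT a b c d hab hcd
  have hp : p a b ≠ 0 := fun h => by simpa [h] using h2 a b
  have hqa : q a b ≠ 0 := fun h => by simpa [h] using h3 a b
  have hqc : q c d ≠ 0 := fun h => by simpa [h] using h3 c d
  have hpq := h1 a b hab
  generalize T a c * T b d = X at *
  generalize T a d * T b c = Y at *
  have hpi : (p a b)⁻¹ = q a b * u⁻¹ ^ 2 := by
    field_simp; linear_combination -hpq
  have eZ : T b c * T a d = (q a b * u⁻¹ ^ 2 * q c d) • Y := by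
    rw [← hpi, mul_smul, r3, smul_smul, inv_mul_cancel₀ hp, one_smul]
  have eW : T b d * T a c = q a b • ((q c d)⁻¹ • X - (1 - u⁻¹ ^ 2) • Y) := by
    rw [← r4, sub_sub_cancel, smul_smul, mul_inv_cancel₀ hqa, one_smul]
  rw [eZ, eW]
  have : q a b • X = q c d • q a b • (q c d)⁻¹ • X := by
    rw [smul_smul, smul_smul]; congr 1; field_simp
  rw [this]
  module

theorem qL_exch' {N : ℕ} (p q : Fin N → Fin N → K) (u : K)
    (hpu : PUCondition p q u) (T : Matrix (Fin N) (Fin N) A)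
    (hT : IsPUMatrix p q u T) (a b c d : Fin N) (hab : a ≠ b) (hcd : c ≠ d) :
    T b c * T a d + q a b • (T a c * T b d)
      = q c d • (T b d * T a c + q a b • (T a d * T b c)) := by
  have h3 := hpu.2.2.2.2.1
  wlog h : c < d generalizing c d
  · have := this d c hcd.symm (lt_of_le_of_ne (not_lt.1 h) hcd.symm)
    rw [this, smul_smul, h3, one_smul]
  wlog h' : a < b generalizing a b
  · have := this b a hab.symm (lt_of_le_of_ne (not_lt.1 h') hab.symm)
    have e := congrArg (fun z => q a b • z) this
    simp only [smul_add, smul_smul, mul_comm (q c d), ← mul_assoc, h3, one_smul, one_mul] at e ⊢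
    rw [add_comm, e, add_comm]
  exact qL_exch p q u hpu T hT a b c d h' h

theorem qL_split {n : ℕ} (k : Fin n) : ∃ l1 l2 : List (Fin (n + 1)),
    List.finRange (n + 1) = l1 ++ k.castSucc :: k.succ :: l2 ∧
    (∀ x ∈ l1, x ≠ k.castSucc ∧ x ≠ k.succ) ∧ (∀ x ∈ l2, x ≠ k.castSucc ∧ x ≠ k.succ) := by
  have e : List.finRange (n + 1) = (List.finRange (n + 1)).take k ++ k.castSucc :: k.succ ::
      (List.finRange (n + 1)).drop (k + 2) := by
    have hk := k.isLt
    conv_lhs => rw [← List.take_append_drop k (List.finRange (n + 1))]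
    congr 1
    rw [List.drop_eq_getElem_cons (by simp), List.drop_eq_getElem_cons (by simp)]
    simp only [List.getElem_finRange]
    congr 1
  refine ⟨_, _, e, ?_, ?_⟩
  · have hn := List.nodup_finRange (n + 1)
    rw [e] at hn
    intro x hx
    have := (List.nodup_append.1 hn).2.2 x hx
    exact ⟨this _ (by simp), this _ (by simp)⟩
  · have hn := List.nodup_finRange (n + 1)
    rw [e] at hn
    intro x hx
    have h := (List.nodup_append.1 hn).2.1
    rw [List.nodup_cons, List.nodup_cons] at h
    refine ⟨?_, ?_⟩
    · rintro rfl
      exact h.1 (List.mem_cons_of_mem _ hx)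
    · rintro rfl
      exact h.2.1 hx

theorem qL_oprod_split {n : ℕ} (k : Fin n) : ∃ l1 l2 : List (Fin (n + 1)),
    (∀ f : Fin (n + 1) → A, oprod f
      = (l1.map f).prod * (f k.castSucc * f k.succ) * (l2.map f).prod) ∧
    (∀ x ∈ l1, x ≠ k.castSucc ∧ x ≠ k.succ) ∧ (∀ x ∈ l2, x ≠ k.castSucc ∧ x ≠ k.succ) := by
  obtain ⟨l1, l2, e, h1, h2⟩ := qL_split k
  refine ⟨l1, l2, fun f => ?_, h1, h2⟩
  rw [oprod, e]
  simp [mul_assoc]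

/-- Row-permuted determinant: one adjacent swap of the rows. -/
theorem qL_rows_step {n : ℕ} (p q : Fin (n + 1) → Fin (n + 1) → K) (u : K)
    (hpu : PUCondition p q u) (T : Matrix (Fin (n + 1)) (Fin (n + 1)) A)
    (hT : IsPUMatrix p q u T) (σ : Equiv.Perm (Fin (n + 1))) (k : Fin n) :
    ∑ α : Equiv.Perm (Fin (n + 1)), qSign q α •
        oprod (fun i => T ((σ * Equiv.swap k.castSucc k.succ) i) (α i))
      = (-q (σ k.castSucc) (σ k.succ)) •
        ∑ α : Equiv.Perm (Fin (n + 1)), qSign q α • oprod (fun i => T (σ i) (α i)) := by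
  have hne : k.castSucc ≠ k.succ := (Fin.castSucc_lt_succ).ne
  set s := Equiv.swap k.castSucc k.succ with hs
  have a1 : s k.castSucc = k.succ := Equiv.swap_apply_left _ _
  have a2 : s k.succ = k.castSucc := Equiv.swap_apply_right _ _
  have a3 : ∀ x, x ≠ k.castSucc ∧ x ≠ k.succ → s x = x :=
    fun x hx => Equiv.swap_apply_of_ne_of_ne hx.1 hx.2
  obtain ⟨l1, l2, hsp, h1, h2⟩ := qL_oprod_split (A := A) k
  rw [neg_smul, ← add_eq_zero_iff_eq_neg, Finset.smul_sum, ← Finset.sum_add_distrib]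
  have key : ∀ α : Equiv.Perm (Fin (n + 1)),
      qSign q α • oprod (fun i => T ((σ * s) i) (α i))
        + q (σ k.castSucc) (σ k.succ) • qSign q α • oprod (fun i => T (σ i) (α i))
      = qSign q α • ((l1.map fun i => T (σ i) (α i)).prod *
        (T (σ k.succ) (α k.castSucc) * T (σ k.castSucc) (α k.succ) +
          q (σ k.castSucc) (σ k.succ) •
            (T (σ k.castSucc) (α k.castSucc) * T (σ k.succ) (α k.succ))) *
        (l2.map fun i => T (σ i) (α i)).prod) := by
    intro α
    have m1 : l1.map (fun i => T ((σ * s) i) (α i)) = l1.map (fun i => T (σ i) (α i)) :=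
      List.map_congr_left fun x hx => by rw [Equiv.Perm.mul_apply, a3 x (h1 x hx)]
    have m2 : l2.map (fun i => T ((σ * s) i) (α i)) = l2.map (fun i => T (σ i) (α i)) :=
      List.map_congr_left fun x hx => by rw [Equiv.Perm.mul_apply, a3 x (h2 x hx)]
    rw [hsp, hsp, m1, m2, smul_comm, ← smul_add]
    simp only [Equiv.Perm.mul_apply, a1, a2, mul_add, add_mul, mul_smul_comm, smul_mul_assoc]
  simp only [key]
  refine Finset.sum_involution (fun α _ => α * s) ?_ ?_ (fun _ _ => Finset.mem_univ _) ?_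
  · intro α _
    have m1 : l1.map (fun i => T (σ i) ((α * s) i)) = l1.map (fun i => T (σ i) (α i)) :=
      List.map_congr_left fun x hx => by rw [Equiv.Perm.mul_apply, a3 x (h1 x hx)]
    have m2 : l2.map (fun i => T (σ i) ((α * s) i)) = l2.map (fun i => T (σ i) (α i)) :=
      List.map_congr_left fun x hx => by rw [Equiv.Perm.mul_apply, a3 x (h2 x hx)]
    rw [m1, m2, qL_sign_swap q hpu.2.2.2.2.1,
      qL_exch' p q u hpu T hT (σ k.castSucc) (σ k.succ) (α k.castSucc) (α k.succ)
        (fun h => hne (σ.injective h)) (fun h => hne (α.injective h))]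
    simp only [Equiv.Perm.mul_apply, a1, a2, mul_smul_comm, smul_mul_assoc]
    module
  · intro α _ _ h
    have h' : s = 1 := by simpa using h
    rw [h'] at a1
    exact hne a1
  · intro α _
    rw [mul_assoc, hs, Equiv.swap_mul_self, mul_one]

theorem qL_rows {n : ℕ} (p q : Fin n → Fin n → K) (u : K)
    (hpu : PUCondition p q u) (T : Matrix (Fin n) (Fin n) A)
    (hT : IsPUMatrix p q u T) (σ : Equiv.Perm (Fin n)) :
    ∑ α : Equiv.Perm (Fin n), qSign q α • oprod (fun i => T (σ i) (α i))
      = qSign q σ • qdet q T := by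
  have one : ∑ α : Equiv.Perm (Fin n), qSign q α •
      oprod (fun i => T ((1 : Equiv.Perm (Fin n)) i) (α i)) = qSign q 1 • qdet q T := by
    have : qSign q 1 = 1 := by
      rw [qSign]
      refine Finset.prod_eq_one fun x hx => ?_
      have := (Finset.mem_filter.1 hx).2
      exact absurd this.1 this.2.not_gt
    rw [this, one_smul]; rfl
  rcases n with _ | n
  · rw [Subsingleton.elim σ 1]; exact one
  · refine Submonoid.induction_of_closure_eq_top_right
      (Equiv.Perm.mclosure_swap_castSucc_succ n) σ one ?_
    rintro σ _ ⟨k, rfl⟩ ih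
    rw [qL_rows_step p q u hpu T hT σ k, ih, qL_sign_swap q hpu.2.2.2.2.1, smul_smul]

/-- Block permutation. -/
def qLblk {t m : ℕ} (a : Equiv.Perm (Fin t)) (b : Equiv.Perm (Fin m)) :
    Equiv.Perm (Fin (t + m)) :=
  finSumFinEquiv.permCongr (Equiv.Perm.sumCongr a b)

theorem qLblk_l {t m : ℕ} (a : Equiv.Perm (Fin t)) (b : Equiv.Perm (Fin m)) (x : Fin t) :
    qLblk a b (Fin.castAdd m x) = Fin.castAdd m (a x) := by
  simp [qLblk, Equiv.permCongr_apply]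

theorem qLblk_r {t m : ℕ} (a : Equiv.Perm (Fin t)) (b : Equiv.Perm (Fin m)) (x : Fin m) :
    qLblk a b (Fin.natAdd t x) = Fin.natAdd t (b x) := by
  simp [qLblk, Equiv.permCongr_apply]

theorem qLblk_mul {t m : ℕ} (a a' : Equiv.Perm (Fin t)) (b b' : Equiv.Perm (Fin m)) :
    qLblk a b * qLblk a' b' = qLblk (a * a') (b * b') := by
  ext x
  induction x using Fin.addCases <;> simp [qLblk_l, qLblk_r]

theorem qLblk_one {t m : ℕ} :
    qLblk (1 : Equiv.Perm (Fin t)) (1 : Equiv.Perm (Fin m)) = 1 := by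
  ext x
  induction x using Fin.addCases <;> simp [qLblk_l, qLblk_r]

theorem qL_oprod_add {t m : ℕ} (f : Fin (t + m) → A) :
    oprod f = oprod (fun i => f (Fin.castAdd m i)) * oprod (fun i => f (Fin.natAdd t i)) := by
  unfold oprod
  rw [← List.ofFn_eq_map, ← List.ofFn_eq_map, ← List.ofFn_eq_map, ← List.prod_append,
    ← List.ofFn_fin_append]
  congr 2
  exact (Fin.append_castAdd_natAdd).symm

/-- Shuffle condition in block form. -/
theorem qL_shuffle_iff {t m : ℕ} (α : Equiv.Perm (Fin (t + m))) :
    (∀ a b : Fin (t + m), a < b → ((b : ℕ) < t ∨ t ≤ (a : ℕ)) → α a < α b) ↔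
      (StrictMono fun x : Fin t => α (Fin.castAdd m x)) ∧
      (StrictMono fun x : Fin m => α (Fin.natAdd t x)) := by
  constructor
  · intro h
    refine ⟨fun x y hxy => h _ _ ?_ (Or.inl ?_), fun x y hxy => h _ _ ?_ (Or.inr ?_)⟩
    · first | exact hxy | simpa using hxy
    · simp
    · first | exact hxy | simpa using hxy
    · simp
  · rintro ⟨h1, h2⟩ a b hab hh
    induction a using Fin.addCases with
    | left a =>
      induction b using Fin.addCases with
      | left b => exact h1 hab
      | right b => simp at hh; omega
    | right a =>
      induction b using Fin.addCases with
      | left b => simp [Fin.lt_def] at hab; omega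
      | right b => exact h2 (by simpa using hab)

theorem qL_sign_blk {t m : ℕ} (q : Fin (t + m) → Fin (t + m) → K) (α : Equiv.Perm (Fin (t + m)))
    (h1 : StrictMono fun x : Fin t => α (Fin.castAdd m x))
    (h2 : StrictMono fun x : Fin m => α (Fin.natAdd t x))
    (a : Equiv.Perm (Fin t)) (b : Equiv.Perm (Fin m)) :
    qSign q (α * qLblk a b) = qSign q α *
      (qSign (fun x y => q (α (Fin.castAdd m x)) (α (Fin.castAdd m y))) a *
       qSign (fun x y => q (α (Fin.natAdd t x)) (α (Fin.natAdd t y))) b) := by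
  have main : ∀ (a : Equiv.Perm (Fin t)) (b : Equiv.Perm (Fin m)),
      qSign q (α * qLblk a b) =
      (∏ x : Fin t, ∏ y : Fin m, if α (Fin.natAdd t y) < α (Fin.castAdd m x) then
        -q (α (Fin.natAdd t y)) (α (Fin.castAdd m x)) else 1) *
      (qSign (fun x y => q (α (Fin.castAdd m x)) (α (Fin.castAdd m y))) a *
       qSign (fun x y => q (α (Fin.natAdd t x)) (α (Fin.natAdd t y))) b) := by
    intro a b
    rw [qL_sign_eq, qL_sign_eq, qL_sign_eq]
    simp only [Fin.prod_univ_add, Equiv.Perm.mul_apply, qLblk_l, qLblk_r]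
    have f1 : ∀ x y : Fin t, α (Fin.castAdd m x) < α (Fin.castAdd m y) ↔ x < y :=
      fun x y => h1.lt_iff_lt
    have f2 : ∀ x y : Fin m, α (Fin.natAdd t x) < α (Fin.natAdd t y) ↔ x < y :=
      fun x y => h2.lt_iff_lt
    have f3 : ∀ (x : Fin t) (y : Fin m), Fin.castAdd m x < Fin.natAdd t y := by
      intro x y; simp only [Fin.lt_def, Fin.val_castAdd, Fin.val_natAdd]; omega
    have f4 : ∀ (x : Fin t) (y : Fin m), ¬ Fin.natAdd t y < Fin.castAdd m x :=
      fun x y => (f3 x y).not_gt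
    have f5 : ∀ x y : Fin t, Fin.castAdd m x < Fin.castAdd m y ↔ x < y := fun x y => Iff.rfl
    have f6 : ∀ x y : Fin m, Fin.natAdd t x < Fin.natAdd t y ↔ x < y := by
      intro x y; simp
    simp only [f1, f2, f3, f4, f5, f6, true_and, false_and, if_false, Finset.prod_const_one,
      one_mul, Finset.prod_mul_distrib]
    have e : (∏ x : Fin t, ∏ y : Fin m,
        if α (Fin.natAdd t (b y)) < α (Fin.castAdd m (a x)) then
        -q (α (Fin.natAdd t (b y))) (α (Fin.castAdd m (a x))) else 1) =
        ∏ x : Fin t, ∏ y : Fin m, if α (Fin.natAdd t y) < α (Fin.castAdd m x) then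
        -q (α (Fin.natAdd t y)) (α (Fin.castAdd m x)) else 1 := by
      rw [← Equiv.prod_comp a (fun x => ∏ y : Fin m,
        if α (Fin.natAdd t y) < α (Fin.castAdd m x) then
        -q (α (Fin.natAdd t y)) (α (Fin.castAdd m x)) else 1)]
      refine Finset.prod_congr rfl fun x _ => ?_
      exact Equiv.prod_comp b (fun y => if α (Fin.natAdd t y) < α (Fin.castAdd m (a x)) then
        -q (α (Fin.natAdd t y)) (α (Fin.castAdd m (a x))) else 1)
    rw [e]
    ring
  have one : ∀ {N : ℕ} (q : Fin N → Fin N → K), qSign q 1 = 1 := by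
    intro N q
    rw [qSign]
    refine Finset.prod_eq_one fun x hx => ?_
    have := (Finset.mem_filter.1 hx).2
    exact absurd this.1 this.2.not_gt
  have e := main 1 1
  rw [qLblk_one, mul_one, one, one, mul_one, mul_one] at e
  rw [main, ← e]

theorem qL_mono_unique {t N : ℕ} (f g : Fin t → Fin N) (hf : StrictMono f) (hg : StrictMono g)
    (a b : Equiv.Perm (Fin t)) (h : ∀ x, f (a x) = g (b x)) : f = g ∧ a = b := by
  have e : f = g := by
    rw [← hf.range_inj hg, ← a.surjective.range_comp f, ← b.surjective.range_comp g]
    congr 1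
    exact funext h
  refine ⟨e, Equiv.ext fun x => hf.injective ?_⟩
  rw [h, e]

theorem qL_decomp_add {t m : ℕ} (q : Fin (t + m) → Fin (t + m) → K)
    (T : Matrix (Fin (t + m)) (Fin (t + m)) A) (σ : Equiv.Perm (Fin (t + m))) :
    ∑ α : Equiv.Perm (Fin (t + m)), qSign q α • oprod (fun i => T (σ i) (α i))
      = ∑ α ∈ Finset.univ.filter
          (fun α : Equiv.Perm (Fin (t + m)) =>
            ∀ a b : Fin (t + m), a < b → ((b : ℕ) < t ∨ t ≤ (a : ℕ)) → α a < α b),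
          qSign q α •
            (qminor q T (fun a : Fin t => σ (Fin.castAdd m a))
                (fun a : Fin t => α (Fin.castAdd m a))
              * qminor q T (fun a : Fin m => σ (Fin.natAdd t a))
                (fun a : Fin m => α (Fin.natAdd t a))) := by
  simp only [qL_shuffle_iff]
  have expand : ∀ α ∈ Finset.univ.filter (fun α : Equiv.Perm (Fin (t + m)) =>
      (StrictMono fun x : Fin t => α (Fin.castAdd m x)) ∧
      (StrictMono fun x : Fin m => α (Fin.natAdd t x))),
      qSign q α • (qminor q T (fun a : Fin t => σ (Fin.castAdd m a))
                (fun a : Fin t => α (Fin.castAdd m a))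
              * qminor q T (fun a : Fin m => σ (Fin.natAdd t a))
                (fun a : Fin m => α (Fin.natAdd t a)))
      = ∑ z : Equiv.Perm (Fin t) × Equiv.Perm (Fin m), qSign q (α * qLblk z.1 z.2) •
          oprod (fun i => T (σ i) ((α * qLblk z.1 z.2) i)) := by
    intro α hα
    obtain ⟨h1, h2⟩ := (Finset.mem_filter.1 hα).2
    rw [qminor, qminor, Finset.sum_mul_sum, Finset.smul_sum, Fintype.sum_prod_type]
    refine Finset.sum_congr rfl fun a _ => ?_
    rw [Finset.smul_sum]
    refine Finset.sum_congr rfl fun b _ => ?_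
    rw [qL_sign_blk q α h1 h2, qL_oprod_add]
    simp only [Equiv.Perm.mul_apply, qLblk_l, qLblk_r]
    rw [smul_mul_smul_comm, smul_smul]
  rw [Finset.sum_congr rfl expand, ← Finset.sum_product']
  symm
  refine Finset.sum_nbij (fun z => z.1 * qLblk z.2.1 z.2.2) (fun _ _ => Finset.mem_univ _)
    ?_ ?_ (fun _ _ => rfl)
  · rintro ⟨α, a, b⟩ h ⟨α', a', b'⟩ h' e
    simp only [Finset.coe_product, Set.mem_prod, Finset.mem_coe, Finset.mem_filter,
      Finset.mem_univ, true_and, and_true] at h h'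
    have e' : ∀ x, α (qLblk a b x) = α' (qLblk a' b' x) := fun x => DFunLike.congr_fun e x
    obtain ⟨i1, i2⟩ := qL_mono_unique _ _ h.1 h'.1 a a'
      (fun x => by simpa only [qLblk_l] using e' (Fin.castAdd m x))
    obtain ⟨j1, j2⟩ := qL_mono_unique _ _ h.2 h'.2 b b'
      (fun x => by simpa only [qLblk_r] using e' (Fin.natAdd t x))
    subst i2 j2
    have : α = α' := mul_right_cancel e
    rw [this]
  · intro β _
    let a := Tuple.sort fun x : Fin t => β (Fin.castAdd m x)
    let b := Tuple.sort fun x : Fin m => β (Fin.natAdd t x)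
    refine ⟨(β * qLblk a b, a⁻¹, b⁻¹), ?_, ?_⟩
    · simp only [Finset.coe_product, Set.mem_prod, Finset.mem_coe, Finset.mem_filter,
        Finset.mem_univ, true_and, and_true]
      constructor
      · refine Monotone.strictMono_of_injective ?_ ?_
        · simp only [Equiv.Perm.mul_apply, qLblk_l]
          exact Tuple.monotone_sort fun x : Fin t => β (Fin.castAdd m x)
        · exact (β * qLblk a b).injective.comp (Fin.castAdd_injective t m)
      · refine Monotone.strictMono_of_injective ?_ ?_
        · simp only [Equiv.Perm.mul_apply, qLblk_r]
          exact Tuple.monotone_sort fun x : Fin m => β (Fin.natAdd t x)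
        · exact (β * qLblk a b).injective.comp (Fin.natAdd_injective m t)
    · show β * qLblk a b * qLblk a⁻¹ b⁻¹ = β
      rw [mul_assoc, qLblk_mul, mul_inv_cancel, mul_inv_cancel, qLblk_one, mul_one]

theorem qL_decomp {n : ℕ} (q : Fin n → Fin n → K) (T : Matrix (Fin n) (Fin n) A)
    (t m : ℕ) (h : t + m = n) (ht : t ≤ n) (σ : Equiv.Perm (Fin n)) :
    ∑ α : Equiv.Perm (Fin n), qSign q α • oprod (fun i => T (σ i) (α i))
      = ∑ α ∈ Finset.univ.filter
          (fun α : Equiv.Perm (Fin n) =>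
            ∀ a b : Fin n, a < b → ((b : ℕ) < t ∨ t ≤ (a : ℕ)) → α a < α b),
          qSign q α •
            (qminor q T (fun a : Fin t => σ (Fin.castLE ht a))
                (fun a : Fin t => α (Fin.castLE ht a))
              * qminor q T
                (fun a : Fin m => σ ⟨t + a.val, by have := a.isLt; omega⟩)
                (fun a : Fin m => α ⟨t + a.val, by have := a.isLt; omega⟩)) := by
  subst h
  exact qL_decomp_add q T σ

/-- row Laplace expansion of the quantum determinant along a fixed
`t`-shuffle `σ` of the rows, summed over all `t`-shuffles `α` of the columns. -/
theorem qdet_laplace_row {n : ℕ} (p q : Fin n → Fin n → K) (u : K)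
    (hpu : PUCondition p q u) (T : Matrix (Fin n) (Fin n) A)
    (hT : IsPUMatrix p q u T) (t : ℕ) (ht : t ≤ n)
    (σ : Equiv.Perm (Fin n))
    (hσ : ∀ a b : Fin n, a < b → ((b : ℕ) < t ∨ t ≤ (a : ℕ)) → σ a < σ b) :
    qdet q T
      = ∑ α ∈ Finset.univ.filter
          (fun α : Equiv.Perm (Fin n) =>
            ∀ a b : Fin n, a < b → ((b : ℕ) < t ∨ t ≤ (a : ℕ)) → α a < α b),
          ((qSign q σ)⁻¹ * qSign q α) •
            (qminor q T (fun a : Fin t => σ (Fin.castLE ht a))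
                (fun a : Fin t => α (Fin.castLE ht a))
              * qminor q T
                (fun a : Fin (n - t) => σ ⟨t + a.val, by have := a.isLt; omega⟩)
                (fun a : Fin (n - t) => α ⟨t + a.val, by have := a.isLt; omega⟩)) := by
  obtain ⟨m, hm⟩ : ∃ m, t + m = n := ⟨n - t, by omega⟩
  have h1 := qL_rows p q u hpu T hT σ
  have h2 := qL_decomp q T t (n - t) (by omega) ht σ
  have h0 := qL_sign_ne p q u hpu σ
  rw [h2] at h1
  have h3 : qdet q T = (qSign q σ)⁻¹ • (qSign q σ • qdet q T) := by
    rw [smul_smul, inv_mul_cancel₀ h0, one_smul]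
  rw [h3, ← h1, Finset.smul_sum]
  refine Finset.sum_congr rfl fun α _ => ?_
  rw [smul_smul]
end

section
/- (Column Laplace expansion) Let T be an n×n (p,u)-matrix over a K-algebra A and fix an r-shuffle τ ∈ S_n, i.e. τ(1) < ⋯ < τ(r) and τ(r+1) < ⋯ < τ(n). Then det_q(T) = Σ_β ((−p)_β / (−p)_τ) · det_q(T^{β(1)…β(r)}_{τ(1)…τ(r)}) · det_q(T^{β(r+1)…β(n)}_{τ(r+1)…τ(n)}), where the sum runs over all r-shuffles β ∈ S_n with β(1) < ⋯ < β(r) and β(r+1) < ⋯ < β(n). -/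
open Finset

variable {K : Type*} [Field K] {A : Type*} [Ring A] [Algebra K A]

/-- Product over inversions, indexed by values. -/
def invW {M : Type*} [CommMonoid M] {N : ℕ} (G : Fin N → Fin N → M)
    (π : Equiv.Perm (Fin N)) : M :=
  ∏ x : Fin N × Fin N, if x.1 < x.2 ∧ π.symm x.2 < π.symm x.1 then G x.1 x.2 else 1

theorem qSign_eq_invW {N : ℕ} (q : Fin N → Fin N → K) (σ : Equiv.Perm (Fin N)) :
    qSign q σ = invW (fun a b => -q a b) σ := by
  unfold qSign invW
  rw [Finset.prod_filter]
  refine Fintype.prod_equiv ((Equiv.prodComm _ _).trans (Equiv.prodCongr σ σ)) _ _ ?_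
  rintro ⟨a, b⟩
  simp [and_comm]

theorem qSign_eq_invW_inv {N : ℕ} (q : Fin N → Fin N → K) (σ : Equiv.Perm (Fin N)) :
    qSign q σ = invW (fun v w => -q (σ w) (σ v)) σ⁻¹ := by
  unfold qSign invW
  rw [Finset.prod_filter]
  rfl

theorem swap_adj_lt {N : ℕ} (i j a b : Fin N) (hij : (j : ℕ) = i + 1)
    (h : ¬ (a = i ∧ b = j)) (h' : ¬ (a = j ∧ b = i)) :
    Equiv.swap i j a < Equiv.swap i j b ↔ a < b := by
  simp only [Equiv.swap_apply_def]
  split_ifs <;> simp only [Fin.lt_def, Fin.ext_iff] at * <;> omega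

theorem invW_mul_swap {M : Type*} [CommMonoid M] {N : ℕ} (G : Fin N → Fin N → M)
    (π : Equiv.Perm (Fin N)) (i j : Fin N) (hij : (j : ℕ) = i + 1) (h : π i < π j) :
    invW G (π * Equiv.swap i j) = G (π i) (π j) * invW G π := by
  have hlt : i < j := by rw [Fin.lt_def]; omega
  have key : ∀ x : Fin N × Fin N,
      (if x.1 < x.2 ∧ (π * Equiv.swap i j).symm x.2 < (π * Equiv.swap i j).symm x.1
        then G x.1 x.2 else 1)
      = (if x = (π i, π j) then G (π i) (π j) else 1) *
        (if x.1 < x.2 ∧ π.symm x.2 < π.symm x.1 then G x.1 x.2 else 1) := by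
    rintro ⟨v, w⟩
    have hs : ∀ z, (π * Equiv.swap i j).symm z = Equiv.swap i j (π.symm z) := by
      intro z
      rw [Equiv.symm_apply_eq]
      simp
    simp only [hs]
    by_cases h1 : v = π i ∧ w = π j
    · obtain ⟨rfl, rfl⟩ := h1
      simp [h, hlt, hlt.le]
    · have h2 : ¬ ((v, w) = (π i, π j)) := by simpa using h1
      rw [if_neg h2, one_mul]
      by_cases h3 : v = π j ∧ w = π i
      · obtain ⟨rfl, rfl⟩ := h3
        have h4 : ¬ π j < π i := not_lt.mpr h.le
        simp [h4]
      · have := swap_adj_lt i j (π.symm w) (π.symm v) hij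
          (by rintro ⟨e1, e2⟩; rw [Equiv.symm_apply_eq] at e1 e2; exact h3 ⟨e2, e1⟩)
          (by rintro ⟨e1, e2⟩; rw [Equiv.symm_apply_eq] at e1 e2; exact h1 ⟨e2, e1⟩)
        simp only [this]
  unfold invW
  rw [Finset.prod_congr rfl (fun x _ => key x), Finset.prod_mul_distrib]
  simp

theorem oprod_adj {N : ℕ} (i j : Fin N) (hij : (j : ℕ) = i + 1) :
    ∃ L R : (Fin N → A) → A, (∀ f, oprod f = L f * (f i * f j) * R f) ∧
      ∀ f g : Fin N → A, (∀ a, a ≠ i → a ≠ j → f a = g a) → L f = L g ∧ R f = R g := by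
  have hd : List.finRange N = (List.finRange N).take i ++
      i :: j :: (List.finRange N).drop (i + 2) := by
    conv_lhs => rw [← List.take_append_drop i (List.finRange N)]
    congr 1
    rw [List.drop_eq_getElem_cons (by simp), List.drop_eq_getElem_cons (by simp; omega)]
    simp [Fin.ext_iff, hij]
  have hn := List.nodup_finRange N
  rw [hd] at hn
  generalize (List.finRange N).take i = l1 at *
  generalize (List.finRange N).drop (i + 2) = l2 at *
  refine ⟨fun f => (l1.map f).prod, fun f => (l2.map f).prod, ?_, ?_⟩
  · intro f
    unfold oprod
    rw [hd]
    simp [mul_assoc]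
  · intro f g hfg
    rw [List.nodup_append] at hn
    obtain ⟨h1, h2, h3⟩ := hn
    rw [List.nodup_cons, List.nodup_cons] at h2
    constructor
    · show (l1.map f).prod = (l1.map g).prod
      congr 1
      apply List.map_congr_left
      intro a ha
      exact hfg a (h3 a ha i (by simp)) (h3 a ha j (by simp))
    · show (l2.map f).prod = (l2.map g).prod
      congr 1
      apply List.map_congr_left
      intro a ha
      refine hfg a ?_ ?_
      · rintro rfl; exact h2.1 (by simp [ha])
      · rintro rfl; exact h2.2.1 ha

theorem exists_descent {N : ℕ} (π : Equiv.Perm (Fin N)) (h : π ≠ 1) :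
    ∃ i j : Fin N, (j : ℕ) = i + 1 ∧ π j < π i := by
  by_contra hc
  push Not at hc
  apply h
  have hm : StrictMono π := by
    cases N with
    | zero => intro a; exact a.elim0
    | succ N =>
      rw [Fin.strictMono_iff_lt_succ]
      intro i
      refine lt_of_le_of_ne (hc i.castSucc i.succ (by simp)) ?_
      intro e
      have := π.injective e
      simp [Fin.ext_iff] at this
  have := Tuple.unique_monotone (f := (id : Fin N → Fin N)) (σ := π) (τ := 1)
    hm.monotone monotone_id
  ext a
  simpa using congrArg Fin.val (congrFun this a)

/-- Reordering a product whose inverted pairs quasi-commute. -/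
theorem reorder {N : ℕ} (c d : Fin N → Fin N → K) (x : Fin N → A) (k : ℕ) :
    ∀ π : Equiv.Perm (Fin N), invW (fun _ _ => 2) π ≤ k →
      (∀ v w, v < w → π.symm w < π.symm v →
        c v w • (x v * x w) = d v w • (x w * x v)) →
      invW c π • oprod x = invW d π • oprod (fun a => x (π a)) := by
  induction k with
  | zero =>
    intro π hk
    exfalso
    have : 0 < invW (fun _ _ => 2) π := by
      unfold invW
      apply Finset.prod_pos
      intro y _
      split_ifs <;> simp
    omega
  | succ k ih =>
    intro π hk hx
    by_cases h1 : π = 1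
    · subst h1
      have : ∀ G : Fin N → Fin N → K, invW G 1 = 1 := by
        intro G
        unfold invW
        apply Finset.prod_eq_one
        rintro ⟨a, b⟩ _
        rw [if_neg]
        rintro ⟨e1, e2⟩
        exact absurd e1 (not_lt.mpr (le_of_lt e2))
      simp [this]
    obtain ⟨i, j, hij, hd⟩ := exists_descent π h1
    have hlt : i < j := by rw [Fin.lt_def]; omega
    obtain ⟨ρ, hρ⟩ : ∃ ρ, ρ = π * Equiv.swap i j := ⟨_, rfl⟩
    have hπ : π = ρ * Equiv.swap i j := by rw [hρ, mul_assoc]; simp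
    have hi : ρ i = π j := by simp [hρ]
    have hj : ρ j = π i := by simp [hρ]
    have hr : ρ i < ρ j := by rw [hi, hj]; exact hd
    have hW : ∀ {M : Type _} [CommMonoid M] (G : Fin N → Fin N → M),
        invW G π = G (ρ i) (ρ j) * invW G ρ := by
      intro M _ G
      rw [hπ]
      exact invW_mul_swap G ρ i j hij hr
    have hW2 : invW (fun _ _ => 2) π = 2 * invW (fun _ _ => 2) ρ := by
      conv_lhs => rw [hπ]
      exact invW_mul_swap (fun _ _ => (2 : ℕ)) ρ i j hij hr
    have hpos : 0 < invW (fun _ _ => 2) ρ := by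
      unfold invW
      apply Finset.prod_pos
      intro y _
      split_ifs <;> simp
    have IH := ih ρ (by omega) (by
      intro v w hvw hs
      apply hx v w hvw
      have hsym : ∀ z, π.symm z = Equiv.swap i j (ρ.symm z) := by
        intro z
        rw [Equiv.symm_apply_eq, hπ]
        simp
      rw [hsym, hsym, swap_adj_lt i j _ _ hij ?_ ?_]
      · exact hs
      · rintro ⟨e1, e2⟩
        rw [Equiv.symm_apply_eq] at e1 e2
        rw [e1, e2] at hvw
        exact absurd hvw (not_lt.mpr hr.le)
      · rintro ⟨e1, e2⟩
        rw [e1, e2] at hs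
        exact absurd hs (not_lt.mpr hlt.le))
    rw [hW c, hW d, mul_smul, IH, smul_comm, mul_comm, mul_smul]
    congr 1
    obtain ⟨L, R, hLR, hLR'⟩ := oprod_adj (A := A) i j hij
    obtain ⟨eL, eR⟩ := hLR' (fun a => x (ρ a)) (fun a => x (π a)) (by
      intro a h1 h2
      simp [hρ, Equiv.swap_apply_of_ne_of_ne h1 h2])
    rw [hLR, hLR, eL, eR]
    have := hx (ρ i) (ρ j) hr (by rw [hi, hj]; simpa using hlt)
    rw [← hi, ← hj]
    have h5 := congrArg (fun z => L (fun a => x (π a)) * z * R (fun a => x (π a))) this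
    simpa only [mul_smul_comm, smul_mul_assoc] using h5

theorem qminor_eq {N t : ℕ} (p q : Fin N → Fin N → K) (u : K)
    (T : Matrix (Fin N) (Fin N) A) (hT : IsPUMatrix p q u T)
    (R C : Fin t → Fin N) (hR : StrictMono R) (hC : StrictMono C) :
    qminor q T R C = ∑ σ : Equiv.Perm (Fin t),
      qSign (fun a b => p (R a) (R b)) σ • oprod (fun a => T (R (σ a)) (C a)) := by
  unfold qminor
  refine Fintype.sum_equiv (Equiv.inv _) _ _ ?_
  intro σ
  rw [qSign_eq_invW_inv, qSign_eq_invW]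
  have := reorder (fun v w => -q (C (σ w)) (C (σ v))) (fun v w => -p (R v) (R w))
    (fun a => T (R a) (C (σ a))) _ σ⁻¹ le_rfl (by
      intro v w hvw hs
      have h := (hT (R v) (R w) (C (σ w)) (C (σ v)) (hR hvw) (hC hs)).2.2.1
      simp only [neg_smul, h])
  simpa using this

/-- The column-permuted sum. -/
def colF {N : ℕ} (p : Fin N → Fin N → K) (T : Matrix (Fin N) (Fin N) A)
    (τ : Equiv.Perm (Fin N)) : A :=
  ∑ σ : Equiv.Perm (Fin N), qSign p σ • oprod (fun a => T (σ a) (τ a))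

theorem sum_pair {N : ℕ} (f : Equiv.Perm (Fin N) → A) (i j : Fin N) (hij : i ≠ j) :
    ∑ σ, f σ = ∑ σ ∈ Finset.univ.filter (fun σ : Equiv.Perm (Fin N) => σ i < σ j),
      (f σ + f (σ * Equiv.swap i j)) := by
  rw [Finset.sum_add_distrib,
    ← Finset.sum_filter_add_sum_filter_not Finset.univ
      (fun σ : Equiv.Perm (Fin N) => σ i < σ j)]
  congr 1
  rw [Finset.sum_filter, Finset.sum_filter]
  refine Fintype.sum_equiv (Equiv.mulRight (Equiv.swap i j)) _ _ ?_
  intro σ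
  have hne : σ i ≠ σ j := fun e => hij (σ.injective e)
  have h : (¬ σ i < σ j) ↔ σ j < σ i :=
    ⟨fun h => lt_of_le_of_ne (not_lt.mp h) hne.symm, fun h => not_lt.mpr h.le⟩
  simp [h, mul_assoc]

theorem rel_lt {N : ℕ} (p q : Fin N → Fin N → K) (u : K)
    (hpu : PUCondition p q u) (T : Matrix (Fin N) (Fin N) A)
    (hT : IsPUMatrix p q u T) (v w k l : Fin N) (hvw : v < w) (hkl : k < l) :
    T v l * T w k - p v w • (T w l * T v k) =
      (-p k l) • (T v k * T w l - p v w • (T w k * T v l)) := by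
  obtain ⟨hu, -, hpq, hp, hq, -⟩ := hpu
  obtain ⟨-, -, h3, h4⟩ := hT v w k l hvw hkl
  have e1 := hpq v w hvw
  have e2 := hpq k l hkl
  have q1 : q v w ≠ 0 := left_ne_zero_of_mul_eq_one (hq v w)
  have q2 : q k l ≠ 0 := left_ne_zero_of_mul_eq_one (hq k l)
  have h5 := congrArg (fun z => u ^ 2 • z) h4
  simp only [smul_sub, smul_smul] at h5
  have f1 : u ^ 2 * (q k l)⁻¹ = p k l := by rw [← e2]; field_simp
  have f2 : u ^ 2 * (q v w)⁻¹ = p v w := by rw [← e1]; field_simp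
  have f3 : u ^ 2 * (1 - u⁻¹ ^ 2) = p k l * q k l - 1 := by rw [e2]; field_simp
  rw [f1, f2, f3, sub_smul, mul_smul, h3, one_smul] at h5
  rw [neg_smul, smul_sub]
  have h6 : T v l * T w k = p k l • p v w • (T w k * T v l) -
    (p k l • (T v k * T w l) - p v w • (T w l * T v k)) := by rw [h5]; abel
  rw [h6]; abel

theorem rel_ne {N : ℕ} (p q : Fin N → Fin N → K) (u : K)
    (hpu : PUCondition p q u) (T : Matrix (Fin N) (Fin N) A)
    (hT : IsPUMatrix p q u T) (v w k l : Fin N) (hvw : v < w) (hkl : k ≠ l) :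
    T v l * T w k - p v w • (T w l * T v k) =
      (-p k l) • (T v k * T w l - p v w • (T w k * T v l)) := by
  rcases lt_or_gt_of_ne hkl with h | h
  · exact rel_lt p q u hpu T hT v w k l hvw h
  · rw [rel_lt p q u hpu T hT v w l k hvw h, smul_smul, neg_mul_neg, hpu.2.2.2.1, one_smul]

theorem qSign_mul_swap {N : ℕ} (p : Fin N → Fin N → K) (hp : ∀ i j, p i j * p j i = 1)
    (σ : Equiv.Perm (Fin N)) (i j : Fin N) (hij : (j : ℕ) = i + 1) :
    qSign p (σ * Equiv.swap i j) = -p (σ i) (σ j) * qSign p σ := by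
  have hne : i ≠ j := by intro e; rw [e] at hij; omega
  rcases lt_or_gt_of_ne (fun e => hne (σ.injective e) : σ i ≠ σ j) with h | h
  · rw [qSign_eq_invW, qSign_eq_invW, invW_mul_swap _ σ i j hij h]
  · have := invW_mul_swap (fun a b => -p a b) (σ * Equiv.swap i j) i j hij (by simpa using h)
    rw [← qSign_eq_invW, ← qSign_eq_invW, mul_assoc, Equiv.swap_mul_self, mul_one] at this
    rw [this]
    simp [← mul_assoc, hp]

theorem colF_mul_swap {N : ℕ} (p q : Fin N → Fin N → K) (u : K)
    (hpu : PUCondition p q u) (T : Matrix (Fin N) (Fin N) A)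
    (hT : IsPUMatrix p q u T) (τ : Equiv.Perm (Fin N)) (i j : Fin N)
    (hij : (j : ℕ) = i + 1) :
    colF p T (τ * Equiv.swap i j) = (-p (τ i) (τ j)) • colF p T τ := by
  have hne : i ≠ j := by intro e; rw [e] at hij; omega
  obtain ⟨L, R, hLR, hLR'⟩ := oprod_adj (A := A) i j hij
  unfold colF
  rw [sum_pair _ i j hne, sum_pair _ i j hne, Finset.smul_sum]
  apply Finset.sum_congr rfl
  intro σ hσ
  have hσ' : σ i < σ j := (Finset.mem_filter.mp hσ).2
  have hL : ∀ σ' τ' : Equiv.Perm (Fin N), (∀ a, a ≠ i → a ≠ j → σ' a = σ a ∧ τ' a = τ a) →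
      oprod (fun a => T (σ' a) (τ' a)) = L (fun a => T (σ a) (τ a)) *
        (T (σ' i) (τ' i) * T (σ' j) (τ' j)) * R (fun a => T (σ a) (τ a)) := by
    intro σ' τ' h
    obtain ⟨eL, eR⟩ := hLR' (fun a => T (σ' a) (τ' a)) (fun a => T (σ a) (τ a)) (by
      intro a h1 h2
      obtain ⟨e1, e2⟩ := h a h1 h2
      simp only [e1, e2])
    rw [hLR, eL, eR]
  rw [hL, hL, hL, hL]
  rotate_left
  iterate 4
    intro a h1 h2
    simp [Equiv.swap_apply_of_ne_of_ne h1 h2]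
  rw [qSign_mul_swap p hpu.2.2.2.1 σ i j hij]
  have := rel_ne p q u hpu T hT (σ i) (σ j) (τ i) (τ j) hσ' (fun e => hne (τ.injective e))
  generalize L (fun a => T (σ a) (τ a)) = l
  generalize R (fun a => T (σ a) (τ a)) = r
  have h2 := congrArg (fun z => qSign p σ • (l * z * r)) this
  simp only [mul_sub, sub_mul, smul_sub, mul_smul_comm, smul_mul_assoc, smul_smul] at h2
  simp only [Equiv.Perm.mul_apply, Equiv.swap_apply_left, Equiv.swap_apply_right, smul_add,
    smul_smul]
  rw [show -p (σ i) (σ j) * qSign p σ = -(qSign p σ * p (σ i) (σ j)) by ring, neg_smul,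
    ← sub_eq_add_neg, h2, sub_eq_add_neg, ← neg_smul]
  congr 2 <;> ring

theorem qSign_one {N : ℕ} (p : Fin N → Fin N → K) : qSign p 1 = 1 := by
  unfold qSign
  apply Finset.prod_eq_one
  intro x hx
  have := (Finset.mem_filter.mp hx).2
  exact absurd this.1 (not_lt.mpr this.2.le)

theorem colF_eq {N : ℕ} (p q : Fin N → Fin N → K) (u : K)
    (hpu : PUCondition p q u) (T : Matrix (Fin N) (Fin N) A)
    (hT : IsPUMatrix p q u T) (τ : Equiv.Perm (Fin N)) :
    colF p T τ = qSign p τ • colF p T 1 := by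
  cases N with
  | zero =>
    have : τ = 1 := Subsingleton.elim _ _
    rw [this, qSign_one, one_smul]
  | succ N =>
    have hmem : τ ∈ Submonoid.closure
        (Set.range fun i : Fin N => Equiv.swap i.castSucc i.succ) := by
      rw [Equiv.Perm.mclosure_swap_castSucc_succ]; trivial
    induction hmem using Submonoid.closure_induction_right with
    | one => rw [qSign_one, one_smul]
    | mul_right x hx y hy ih =>
      obtain ⟨i, rfl⟩ := hy
      simp only
      rw [colF_mul_swap p q u hpu T hT x _ _ (by simp), ih,
        qSign_mul_swap p hpu.2.2.2.1 x _ _ (by simp), mul_smul]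

theorem oprod_split {r m n : ℕ} (h : r + m = n) (f : Fin n → A) :
    oprod f = oprod (fun a : Fin r => f (Fin.cast h (Fin.castAdd m a))) *
      oprod (fun a : Fin m => f (Fin.cast h (Fin.natAdd r a))) := by
  subst h
  unfold oprod
  simp only [← List.ofFn_eq_map]
  rw [← List.prod_append, ← List.ofFn_fin_append]
  congr 2
  ext a
  refine Fin.addCases (fun b => ?_) (fun b => ?_) a <;> simp

/-- Block permutation. -/
def blk {r m n : ℕ} (h : r + m = n) (s : Equiv.Perm (Fin r)) (t : Equiv.Perm (Fin m)) :
    Equiv.Perm (Fin n) :=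
  (finSumFinEquiv.trans (finCongr h)).permCongr (Equiv.Perm.sumCongr s t)

theorem blk_left {r m n : ℕ} (h : r + m = n) (s : Equiv.Perm (Fin r))
    (t : Equiv.Perm (Fin m)) (a : Fin r) :
    blk h s t (Fin.cast h (Fin.castAdd m a)) = Fin.cast h (Fin.castAdd m (s a)) := by
  subst h
  simp [blk, Equiv.permCongr_apply]

theorem blk_right {r m n : ℕ} (h : r + m = n) (s : Equiv.Perm (Fin r))
    (t : Equiv.Perm (Fin m)) (a : Fin m) :
    blk h s t (Fin.cast h (Fin.natAdd r a)) = Fin.cast h (Fin.natAdd r (t a)) := by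
  subst h
  simp [blk, Equiv.permCongr_apply]

theorem perm_ext_blk {r m n : ℕ} (h : r + m = n) (σ ρ : Equiv.Perm (Fin n))
    (h1 : ∀ a : Fin r, σ (Fin.cast h (Fin.castAdd m a)) = ρ (Fin.cast h (Fin.castAdd m a)))
    (h2 : ∀ a : Fin m, σ (Fin.cast h (Fin.natAdd r a)) = ρ (Fin.cast h (Fin.natAdd r a))) :
    σ = ρ := by
  subst h
  apply Equiv.ext
  intro a
  exact Fin.addCases h1 h2 a

theorem blk_mul {r m n : ℕ} (h : r + m = n) (s s' : Equiv.Perm (Fin r))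
    (t t' : Equiv.Perm (Fin m)) : blk h s t * blk h s' t' = blk h (s * s') (t * t') := by
  apply perm_ext_blk h <;> intro a <;> simp [blk_left, blk_right]

theorem blk_one {r m n : ℕ} (h : r + m = n) :
    blk h (1 : Equiv.Perm (Fin r)) (1 : Equiv.Perm (Fin m)) = 1 := by
  apply perm_ext_blk h <;> intro a <;> simp [blk_left, blk_right]

theorem blk_inj {r m n : ℕ} (h : r + m = n) {s s' : Equiv.Perm (Fin r)}
    {t t' : Equiv.Perm (Fin m)} (e : blk h s t = blk h s' t') : s = s' ∧ t = t' := by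
  constructor
  · ext a
    have := congrArg (fun z => ((z (Fin.cast h (Fin.castAdd m a)) : Fin n) : ℕ)) e
    simpa [blk_left] using this
  · ext a
    have := congrArg (fun z => ((z (Fin.cast h (Fin.natAdd r a)) : Fin n) : ℕ)) e
    simpa [blk_right] using this

/-- Shuffles. -/
def IsShuf {r m n : ℕ} (h : r + m = n) (β : Equiv.Perm (Fin n)) : Prop :=
  StrictMono (fun a : Fin r => β (Fin.cast h (Fin.castAdd m a))) ∧
    StrictMono (fun a : Fin m => β (Fin.cast h (Fin.natAdd r a)))

theorem isShuf_iff {r m n : ℕ} (h : r + m = n) (β : Equiv.Perm (Fin n)) :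
    IsShuf h β ↔ ∀ a b : Fin n, a < b → ((b : ℕ) < r ∨ r ≤ (a : ℕ)) → β a < β b := by
  constructor
  · rintro ⟨h1, h2⟩ a b hab hr
    rw [Fin.lt_def] at hab
    rcases hr with hr | hr
    · exact h1 (a := ⟨a, by omega⟩) (b := ⟨b, hr⟩) hab
    · have := h2 (a := ⟨a - r, by omega⟩) (b := ⟨b - r, by omega⟩)
        (by rw [Fin.lt_def]; show (a : ℕ) - r < b - r; omega)
      have ea : Fin.cast h (Fin.natAdd r ⟨a - r, by omega⟩) = a := by
        apply Fin.ext; show r + ((a : ℕ) - r) = a; omega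
      have eb : Fin.cast h (Fin.natAdd r ⟨b - r, by omega⟩) = b := by
        apply Fin.ext; show r + ((b : ℕ) - r) = b; omega
      simp only [ea, eb] at this
      exact this
  · intro H
    constructor
    · intro a b hab
      exact H _ _ (Fin.lt_def.mpr (Fin.lt_def.mp hab)) (Or.inl (by simp))
    · intro a b hab
      exact H _ _ (Fin.lt_def.mpr (Nat.add_lt_add_left (Fin.lt_def.mp hab) r)) (Or.inr (by simp))

theorem shuf_inj {r m n : ℕ} (h : r + m = n) {β β' : Equiv.Perm (Fin n)}
    (hβ : IsShuf h β) (hβ' : IsShuf h β') {s s' : Equiv.Perm (Fin r)}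
    {t t' : Equiv.Perm (Fin m)} (e : β * blk h s t = β' * blk h s' t') :
    β = β' ∧ s = s' ∧ t = t' := by
  have e1 : β' = β * blk h (s * s'⁻¹) (t * t'⁻¹) := by
    have : blk h s' t' * blk h s'⁻¹ t'⁻¹ = 1 := by rw [blk_mul]; simp [blk_one]
    rw [← blk_mul, ← mul_assoc, e, mul_assoc, this, mul_one]
  have hb : β = β' := by
    apply perm_ext_blk h
    · intro a
      have := Tuple.unique_monotone (f := fun a : Fin r => β (Fin.cast h (Fin.castAdd m a)))
        (σ := 1) (τ := s * s'⁻¹) hβ.1.monotone (by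
          have := hβ'.1.monotone
          simp only [e1, Equiv.Perm.mul_apply, blk_left] at this
          exact this)
      have := congrFun this a
      rw [e1, Equiv.Perm.mul_apply β, blk_left]
      exact this
    · intro a
      have := Tuple.unique_monotone (f := fun a : Fin m => β (Fin.cast h (Fin.natAdd r a)))
        (σ := 1) (τ := t * t'⁻¹) hβ.2.monotone (by
          have := hβ'.2.monotone
          simp only [e1, Equiv.Perm.mul_apply, blk_right] at this
          exact this)
      have := congrFun this a
      rw [e1, Equiv.Perm.mul_apply β, blk_right]
      exact this
  subst hb
  exact ⟨rfl, blk_inj h (mul_left_cancel e)⟩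

theorem shuf_surj {r m n : ℕ} (h : r + m = n) (σ : Equiv.Perm (Fin n)) :
    ∃ β s t, IsShuf h β ∧ σ = β * blk h s t := by
  let s := Tuple.sort (fun a : Fin r => σ (Fin.cast h (Fin.castAdd m a)))
  let t := Tuple.sort (fun a : Fin m => σ (Fin.cast h (Fin.natAdd r a)))
  have hs : Monotone fun a : Fin r => σ (Fin.cast h (Fin.castAdd m (s a))) :=
    Tuple.monotone_sort (fun a : Fin r => σ (Fin.cast h (Fin.castAdd m a)))
  have ht : Monotone fun a : Fin m => σ (Fin.cast h (Fin.natAdd r (t a))) :=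
    Tuple.monotone_sort (fun a : Fin m => σ (Fin.cast h (Fin.natAdd r a)))
  refine ⟨σ * blk h s t, s⁻¹, t⁻¹, ⟨?_, ?_⟩, ?_⟩
  · simp only [Equiv.Perm.mul_apply, blk_left]
    refine hs.strictMono_of_injective ?_
    intro a b hab
    simpa using hab
  · simp only [Equiv.Perm.mul_apply, blk_right]
    refine ht.strictMono_of_injective ?_
    intro a b hab
    simpa using hab
  · rw [mul_assoc, blk_mul]; simp [blk_one]

theorem qSign_double {N : ℕ} (p : Fin N → Fin N → K) (σ : Equiv.Perm (Fin N)) :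
    qSign p σ = ∏ a, ∏ b, if a < b ∧ σ b < σ a then -p (σ b) (σ a) else 1 := by
  unfold qSign
  rw [Finset.prod_filter, Fintype.prod_prod_type]

theorem qSign_split {r m n : ℕ} (h : r + m = n) (p : Fin n → Fin n → K)
    (σ : Equiv.Perm (Fin n)) :
    qSign p σ =
      (∏ a : Fin r, ∏ b : Fin r,
        if a < b ∧ σ (Fin.cast h (Fin.castAdd m b)) < σ (Fin.cast h (Fin.castAdd m a))
        then -p (σ (Fin.cast h (Fin.castAdd m b))) (σ (Fin.cast h (Fin.castAdd m a))) else 1) *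
      (∏ a : Fin r, ∏ b : Fin m,
        if σ (Fin.cast h (Fin.natAdd r b)) < σ (Fin.cast h (Fin.castAdd m a))
        then -p (σ (Fin.cast h (Fin.natAdd r b))) (σ (Fin.cast h (Fin.castAdd m a))) else 1) *
      (∏ a : Fin m, ∏ b : Fin m,
        if a < b ∧ σ (Fin.cast h (Fin.natAdd r b)) < σ (Fin.cast h (Fin.natAdd r a))
        then -p (σ (Fin.cast h (Fin.natAdd r b))) (σ (Fin.cast h (Fin.natAdd r a))) else 1) := by
  subst h
  rw [qSign_double, Fin.prod_univ_add]
  simp only [Fin.prod_univ_add, Finset.prod_mul_distrib, Fin.cast_eq_self]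
  have e1 : ∀ (a : Fin r) (b : Fin m), Fin.castAdd m a < Fin.natAdd r b := by
    intro a b; rw [Fin.lt_def]; simp; omega
  have e2 : ∀ (a : Fin r) (b : Fin m), ¬ (Fin.natAdd r b < Fin.castAdd m a) := by
    intro a b; exact not_lt.mpr (e1 a b).le
  have e3 : ∀ (a b : Fin r), Fin.castAdd m a < Fin.castAdd m b ↔ a < b := by
    intro a b; exact Iff.rfl
  have e4 : ∀ (a b : Fin m), Fin.natAdd r a < Fin.natAdd r b ↔ a < b := by
    intro a b; rw [Fin.lt_def, Fin.lt_def]; simp only [Fin.val_natAdd]; omega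
  simp only [e1, e2, e3, e4, true_and, false_and, if_false, Finset.prod_const_one, one_mul]

theorem qSign_shuf {r m n : ℕ} (h : r + m = n) (p : Fin n → Fin n → K)
    (β : Equiv.Perm (Fin n)) (hβ : IsShuf h β) (s : Equiv.Perm (Fin r))
    (t : Equiv.Perm (Fin m)) :
    qSign p (β * blk h s t) = qSign p β *
      (qSign (fun a b => p (β (Fin.cast h (Fin.castAdd m a)))
          (β (Fin.cast h (Fin.castAdd m b)))) s *
        qSign (fun a b => p (β (Fin.cast h (Fin.natAdd r a)))
          (β (Fin.cast h (Fin.natAdd r b)))) t) := by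
  rw [qSign_split h p (β * _), qSign_split h p β, qSign_double _ s, qSign_double _ t]
  simp only [Equiv.Perm.mul_apply, blk_left, blk_right]
  have e1 : ∀ a b : Fin r, β (Fin.cast h (Fin.castAdd m a)) < β (Fin.cast h (Fin.castAdd m b))
      ↔ a < b := fun a b => hβ.1.lt_iff_lt
  have e2 : ∀ a b : Fin m, β (Fin.cast h (Fin.natAdd r a)) < β (Fin.cast h (Fin.natAdd r b))
      ↔ a < b := fun a b => hβ.2.lt_iff_lt
  simp only [e1, e2]
  have n1 : ∀ {k : ℕ} (a b : Fin k), (a < b ∧ b < a) ↔ False := by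
    intro k a b
    exact iff_false_intro (fun hh => absurd hh.1 (not_lt.mpr hh.2.le))
  simp only [n1, if_false, Finset.prod_const_one, one_mul, mul_one]
  have hx : ∀ g : Fin r → Fin m → K, ∏ a, ∏ b, g (s a) (t b) = ∏ a, ∏ b, g a b := by
    intro g
    rw [← Equiv.prod_comp s (fun a => ∏ b, g a b)]
    refine Finset.prod_congr rfl fun a _ => ?_
    exact Equiv.prod_comp t (fun b => g (s a) b)
  rw [hx (fun a b => if β (Fin.cast h (Fin.natAdd r b)) < β (Fin.cast h (Fin.castAdd m a))
        then -p (β (Fin.cast h (Fin.natAdd r b))) (β (Fin.cast h (Fin.castAdd m a))) else 1)]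
  ring

open Classical in
theorem sum_shuf {r m n : ℕ} (h : r + m = n) (f : Equiv.Perm (Fin n) → A) :
    ∑ σ, f σ = ∑ β ∈ Finset.univ.filter (fun β => IsShuf h β),
      ∑ s : Equiv.Perm (Fin r), ∑ t : Equiv.Perm (Fin m), f (β * blk h s t) := by
  simp only [← Fintype.sum_prod_type']
  rw [← Finset.sum_product']
  symm
  refine Finset.sum_bij (fun x _ => x.1 * blk h x.2.1 x.2.2) ?_ ?_ ?_ ?_
  · intro x _; simp
  · rintro ⟨β, s, t⟩ hx ⟨β', s', t'⟩ hy e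
    simp only [Finset.mem_product, Finset.mem_filter, Finset.mem_univ, true_and,
      and_true] at hx hy
    obtain ⟨rfl, rfl, rfl⟩ := shuf_inj h hx hy e
    rfl
  · intro σ _
    obtain ⟨β, s, t, hb, e⟩ := shuf_surj h σ
    exact ⟨(β, s, t), by simp [hb], e.symm⟩
  · intro x _; rfl

theorem colF_shuf {r m n : ℕ} (h : r + m = n) (p q : Fin n → Fin n → K) (u : K)
    (T : Matrix (Fin n) (Fin n) A) (hT : IsPUMatrix p q u T)
    (τ : Equiv.Perm (Fin n)) (hτ : IsShuf h τ) (β : Equiv.Perm (Fin n)) (hβ : IsShuf h β) :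
    ∑ s : Equiv.Perm (Fin r), ∑ t : Equiv.Perm (Fin m),
      qSign p (β * blk h s t) • oprod (fun a => T ((β * blk h s t) a) (τ a)) =
    qSign p β • (qminor q T (fun a : Fin r => β (Fin.cast h (Fin.castAdd m a)))
        (fun a : Fin r => τ (Fin.cast h (Fin.castAdd m a))) *
      qminor q T (fun a : Fin m => β (Fin.cast h (Fin.natAdd r a)))
        (fun a : Fin m => τ (Fin.cast h (Fin.natAdd r a)))) := by
  rw [qminor_eq p q u T hT _ _ hβ.1 hτ.1, qminor_eq p q u T hT _ _ hβ.2 hτ.2,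
    Finset.sum_mul_sum, Finset.smul_sum]
  refine Finset.sum_congr rfl fun s _ => ?_
  rw [Finset.smul_sum]
  refine Finset.sum_congr rfl fun t _ => ?_
  rw [qSign_shuf h p β hβ, oprod_split h, smul_mul_smul_comm, smul_smul]
  simp only [Equiv.Perm.mul_apply, blk_left, blk_right]

/-- column Laplace expansion of the quantum determinant along a fixed
`r`-shuffle `τ` of the columns, summed over all `r`-shuffles `β` of the rows. -/
theorem qdet_laplace_col {n : ℕ} (p q : Fin n → Fin n → K) (u : K)
    (hpu : PUCondition p q u) (T : Matrix (Fin n) (Fin n) A)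
    (hT : IsPUMatrix p q u T) (r : ℕ) (hr : r ≤ n)
    (τ : Equiv.Perm (Fin n))
    (hτ : ∀ a b : Fin n, a < b → ((b : ℕ) < r ∨ r ≤ (a : ℕ)) → τ a < τ b) :
    qdet q T
      = ∑ β ∈ Finset.univ.filter
          (fun β : Equiv.Perm (Fin n) =>
            ∀ a b : Fin n, a < b → ((b : ℕ) < r ∨ r ≤ (a : ℕ)) → β a < β b),
          ((qSign p τ)⁻¹ * qSign p β) •
            (qminor q T (fun a : Fin r => β (Fin.castLE hr a))
                (fun a : Fin r => τ (Fin.castLE hr a))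
              * qminor q T
                (fun a : Fin (n - r) => β ⟨r + a.val, by have := a.isLt; omega⟩)
                (fun a : Fin (n - r) => τ ⟨r + a.val, by have := a.isLt; omega⟩)) := by
  classical
  have h : r + (n - r) = n := by omega
  have hτ' : IsShuf h τ := (isShuf_iff h τ).mpr hτ
  have hne : qSign p τ ≠ 0 := by
    unfold qSign
    rw [Finset.prod_ne_zero_iff]
    intro x _
    exact neg_ne_zero.mpr (left_ne_zero_of_mul_eq_one (hpu.2.2.2.1 _ _))
  have h1 : qdet q T = colF p T 1 := by
    have := qminor_eq p q u T hT (fun a => a) (fun a => a) strictMono_id strictMono_id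
    exact this
  have h2 : qdet q T = (qSign p τ)⁻¹ • colF p T τ := by
    rw [colF_eq p q u hpu T hT τ, smul_smul, inv_mul_cancel₀ hne, one_smul, h1]
  rw [h2]
  unfold colF
  rw [sum_shuf h, Finset.smul_sum]
  have hfil : (Finset.univ.filter (fun β : Equiv.Perm (Fin n) => IsShuf h β)) =
      Finset.univ.filter (fun β : Equiv.Perm (Fin n) =>
            ∀ a b : Fin n, a < b → ((b : ℕ) < r ∨ r ≤ (a : ℕ)) → β a < β b) := by
    ext β
    simp only [Finset.mem_filter, Finset.mem_univ, true_and]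
    exact isShuf_iff h β
  refine Finset.sum_congr (by convert hfil) ?_
  intro β hβ
  have hβ' : IsShuf h β := (isShuf_iff h β).mpr (Finset.mem_filter.mp hβ).2
  rw [colF_shuf h p q u T hT τ hτ' β hβ', mul_smul]
  rfl
end
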